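/- Fix g ≥ 1 and suppose c, c' > 0 are constants such that for every Minkowski reduced β ∈ 𝔐_g and every x ∈ ℝ^g, c·∑_{i=1}^g β_{i,i} x_i² ≤ ᵗxβx ≤ c'·∑_{i=1}^g β_{i,i} x_i². Then for all real m, d > 0 there exist a positive integer k, a matrix β* in the topological interior of 𝔐̄_g in Sym(g,ℝ), and a constant B > 0 such that for every z ∈ ℂ^g and τ ∈ Sym(g,ℂ) with (Im z, Im τ + β*) ∈ C_m and (Im τ)_{1,1} > d, the following hold: (a) Im τ is positive definite (so τ ∈ ℋ_g); and (b) the series defining ϑ(z, 2τ) converges absolutely and |exp(2πik·τ_{g,g})·ϑ(z, 2τ)| ≤ B. -/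

import Mathlib

open Matrix

/-- Condition M(II) of Minkowski reduction: `ᵗaβa ≥ β_{k,k}` for all `k` and all integer
vectors `a` with `gcd(a_k,…,a_g) = 1`. -/
def MinkII {g : ℕ} (β : Matrix (Fin g) (Fin g) ℝ) : Prop :=
  ∀ k : Fin g, ∀ a : Fin g → ℤ,
    Finset.gcd (Finset.univ.filter fun i => k ≤ i) a = 1 →
      β k k ≤ (fun i => (a i : ℝ)) ⬝ᵥ β.mulVec (fun i => (a i : ℝ))

/-- Condition M(III) of Minkowski reduction: `β_{k,k+1} ≥ 0`. -/
def MinkIII {g : ℕ} (β : Matrix (Fin g) (Fin g) ℝ) : Prop :=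
  ∀ k k' : Fin g, (k' : ℕ) = (k : ℕ) + 1 → 0 ≤ β k k'

/-- The set `𝔐_g` of Minkowski reduced symmetric matrices. -/
def MinkReduced {g : ℕ} (β : Matrix (Fin g) (Fin g) ℝ) : Prop :=
  β.IsSymm ∧ (∀ i : Fin g, (i : ℕ) = 0 → 0 < β i i) ∧ MinkII β ∧ MinkIII β

/-- The closed Minkowski cone `𝔐̄_g`: as `𝔐_g`, but with (I) weakened to `β_{1,1} ≥ 0`. -/
def MinkClosed {g : ℕ} (β : Matrix (Fin g) (Fin g) ℝ) : Prop :=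
  β.IsSymm ∧ (∀ i : Fin g, (i : ℕ) = 0 → 0 ≤ β i i) ∧ MinkII β ∧ MinkIII β

/-- The cone `C_m = {(y,β) : β ∈ 𝔐̄_g, |y_i| ≤ m β_{i,i}}`. -/
def CmSet (g : ℕ) (m : ℝ) : Set ((Fin g → ℝ) × Matrix (Fin g) (Fin g) ℝ) :=
  {p | MinkClosed p.2 ∧ ∀ i, |p.1 i| ≤ m * p.2 i i}

/-- The general term of the Riemann theta series `ϑ(z,τ) = ∑_{n∈ℤ^g} exp(πi(ᵗnτn + 2ᵗnz))`. -/
noncomputable def thetaTerm {g : ℕ} (z : Fin g → ℂ) (τ : Matrix (Fin g) (Fin g) ℂ)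
    (n : Fin g → ℤ) : ℂ :=
  Complex.exp (Real.pi * Complex.I *
    ((fun i => (n i : ℂ)) ⬝ᵥ τ.mulVec (fun i => (n i : ℂ)) +
      2 * ((fun i => (n i : ℂ)) ⬝ᵥ z)))

/-- The Riemann theta function. -/
noncomputable def RiemannTheta {g : ℕ} (z : Fin g → ℂ) (τ : Matrix (Fin g) (Fin g) ℂ) : ℂ :=
  ∑' n : Fin g → ℤ, thetaTerm z τ n

lemma aux_qf {g : ℕ} (β : Matrix (Fin g) (Fin g) ℝ) (x : Fin g → ℝ) :
    x ⬝ᵥ β.mulVec x = ∑ i, ∑ j, β i j * x i * x j := by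
  simp only [dotProduct, mulVec, Finset.mul_sum]
  refine Finset.sum_congr rfl fun i _ => Finset.sum_congr rfl fun j _ => by ring

lemma aux_lower {g : ℕ} (E : Matrix (Fin g) (Fin g) ℝ) (δ : ℝ)
    (hE : ∀ i j, |E i j| ≤ δ) (x : Fin g → ℝ) :
    -(g * δ * ∑ i, x i ^ 2) ≤ ∑ i, ∑ j, E i j * x i * x j := by
  have h : ∀ i j, -(δ * (x i ^ 2 + x j ^ 2) / 2) ≤ E i j * x i * x j := by
    intro i j
    have h1 := abs_le.1 (hE i j)
    nlinarith [mul_nonneg (sub_nonneg.2 h1.2) (sq_nonneg (x i - x j)),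
      mul_nonneg (sub_nonneg.2 h1.1) (sq_nonneg (x i + x j)),
      mul_nonneg (sub_nonneg.2 h1.2) (sq_nonneg (x i - x j))]
  calc -(g * δ * ∑ i, x i ^ 2) = ∑ i, ∑ j, -(δ * (x i ^ 2 + x j ^ 2) / 2) := by
        simp only [Finset.sum_neg_distrib, ← Finset.sum_div, ← Finset.mul_sum,
          Finset.sum_add_distrib, Finset.sum_const, Finset.card_univ, Fintype.card_fin,
          nsmul_eq_mul]
        ring
    _ ≤ _ := Finset.sum_le_sum fun i _ => Finset.sum_le_sum fun j _ => h i j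

lemma aux_closed {g : ℕ} (s δ : ℝ) (hs : 0 < s) (hδ : 0 ≤ δ) (hsδ : (2 * g + 1) * δ ≤ s)
    (β : Matrix (Fin g) (Fin g) ℝ) (hsym : β.IsSymm)
    (hd : ∀ i : Fin g, s * ((i : ℕ) + 1) ≤ β i i ∧ β i i ≤ s * ((i : ℕ) + 1) + δ)
    (ho : ∀ i j, i ≠ j → 0 ≤ β i j ∧ β i j ≤ δ) : MinkClosed β := by
  refine ⟨hsym, fun i _ => le_trans (by positivity) (hd i).1, ?_, ?_⟩
  · intro k a ha
    rw [aux_qf]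
    set x : Fin g → ℝ := fun i => (a i : ℝ) with hx
    have hsq : ∀ i, a i ≠ 0 → 1 ≤ x i ^ 2 := by
      intro i hi
      have : 1 ≤ a i ^ 2 := by
        have := pow_pos (abs_pos.2 hi) 2
        rw [sq_abs] at this; omega
      simp only [hx]; exact_mod_cast this
    set E : Matrix (Fin g) (Fin g) ℝ :=
      fun i j => β i j - if i = j then s * ((i : ℕ) + 1) else 0 with hEdef
    have hE : ∀ i j, |E i j| ≤ δ := by
      intro i j
      by_cases hij : i = j
      · subst hij
        have := hd i
        simp only [hEdef, if_true]
        rw [abs_le]; constructor <;> linarith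
      · have := ho i j hij
        simp only [hEdef, if_neg hij]
        rw [abs_le]; constructor <;> linarith
    have hQ : ∑ i, ∑ j, β i j * x i * x j
        = ∑ i : Fin g, s * ((i : ℕ) + 1) * x i ^ 2 + ∑ i, ∑ j, E i j * x i * x j := by
      rw [← Finset.sum_add_distrib]
      refine Finset.sum_congr rfl fun i _ => ?_
      simp only [hEdef, sub_mul, Finset.sum_sub_distrib, ite_mul, zero_mul, Finset.sum_ite_eq,
        Finset.mem_univ, if_true]
      ring
    have hg0 : (0 : ℝ) ≤ g := Nat.cast_nonneg g
    have hgd : 0 ≤ g * δ := mul_nonneg hg0 hδ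
    have hlow : ∑ i : Fin g, (s * ((i : ℕ) + 1) - g * δ) * x i ^ 2
        ≤ ∑ i, ∑ j, β i j * x i * x j := by
      have h1 := aux_lower E δ hE x
      have h2 : ∑ i : Fin g, (s * ((i : ℕ) + 1) - g * δ) * x i ^ 2
        = ∑ i : Fin g, s * ((i : ℕ) + 1) * x i ^ 2 - g * δ * ∑ i, x i ^ 2 := by
        rw [Finset.mul_sum, ← Finset.sum_sub_distrib]
        exact Finset.sum_congr rfl fun i _ => by ring
      rw [h2, hQ]; linarith
    have hco : ∀ i : Fin g, (g + 1) * δ ≤ s * ((i : ℕ) + 1) - g * δ := by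
      intro i
      have : 0 ≤ s * ((i : ℕ) : ℝ) := by positivity
      nlinarith
    have hnn : ∀ i : Fin g, 0 ≤ (s * ((i : ℕ) + 1) - g * δ) * x i ^ 2 := fun i =>
      mul_nonneg (le_trans (by positivity) (hco i)) (sq_nonneg _)
    have hbk := (hd k).2
    by_cases hj : ∃ j, k < j ∧ a j ≠ 0
    · obtain ⟨j, hkj, hj⟩ := hj
      have h1 := Finset.single_le_sum (fun i _ => hnn i) (Finset.mem_univ j)
      have h2 := hsq j hj
      have h3 : ((k : ℕ) : ℝ) + 1 ≤ (j : ℕ) := by exact_mod_cast hkj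
      have h4 := hco j
      have h5 : 0 ≤ (g + 1) * δ := by positivity
      have h6 : s * (((k : ℕ) : ℝ) + 1) ≤ s * (j : ℕ) := mul_le_mul_of_nonneg_left h3 hs.le
      have h7 := mul_le_mul_of_nonneg_left h2 (h5.trans h4)
      nlinarith
    · push Not at hj
      have hdvd : a k ∣ 1 := by
        rw [← ha]
        refine Finset.dvd_gcd fun b hb => ?_
        have hb' : k ≤ b := by simpa using hb
        rcases hb'.eq_or_lt with h | h
        · rw [h]
        · rw [hj b h]; exact dvd_zero _
      have hak : x k ^ 2 = 1 := by
        have : a k ^ 2 = 1 := by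
          rcases Int.isUnit_iff.1 (isUnit_of_dvd_one hdvd) with h | h <;> rw [h] <;> norm_num
        simp only [hx]; exact_mod_cast this
      by_cases hi : ∃ i, i ≠ k ∧ a i ≠ 0
      · obtain ⟨i, hik, hi⟩ := hi
        have h1 : ∑ i ∈ {i, k}, (s * (((i : Fin g) : ℕ) + 1) - g * δ) * x i ^ 2 ≤ _ :=
          Finset.sum_le_sum_of_subset_of_nonneg (Finset.subset_univ _) (fun i _ _ => hnn i)
        rw [Finset.sum_pair hik, hak] at h1
        have h2 := hsq i hi
        have h4 := hco i
        have h5 : 0 ≤ (g + 1) * δ := by positivity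
        have h7 := mul_le_mul_of_nonneg_left h2 (h5.trans h4)
        nlinarith
      · push Not at hi
        rw [Finset.sum_eq_single k, Finset.sum_eq_single k]
        · rw [mul_assoc, ← sq, hak, mul_one]
        · intro j _ h; simp [hi j h]
        · simp
        · intro j _ h; simp [hi j h]
        · simp
  · intro k k' h
    exact (ho k k' (by rintro rfl; omega)).1

lemma aux_mono {g : ℕ} (β : Matrix (Fin g) (Fin g) ℝ) (h : MinkII β) (i j : Fin g)
    (hij : i ≤ j) : β i i ≤ β j j := by
  have h1 := h i (Pi.single j 1) (by
    have hd : Finset.gcd (Finset.univ.filter fun l => i ≤ l) (Pi.single j (1:ℤ)) ∣ 1 := by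
      have := Finset.gcd_dvd (f := (Pi.single j (1:ℤ) : Fin g → ℤ))
        (s := Finset.univ.filter fun l => i ≤ l) (b := j) (by simpa using hij)
      simpa using this
    rw [← Finset.normalize_gcd]
    exact normalize_eq_one.2 (isUnit_of_dvd_one hd))
  rw [aux_qf] at h1
  rw [Finset.sum_eq_single j, Finset.sum_eq_single j] at h1
  · simpa using h1
  · intro l _ h; simp [h]
  · simp
  · intro l _ h; simp [h]
  · simp

lemma aux_summable1 (a : ℝ) (ha : 0 < a) : Summable fun n : ℤ => Real.exp (-a * (n : ℝ) ^ 2) := by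
  have h : Summable fun n : ℕ => Real.exp (-a * (n : ℝ) ^ 2) := by
    refine Summable.of_nonneg_of_le (fun _ => (Real.exp_pos _).le) (fun n => ?_)
      (Real.summable_exp_nat_mul_iff.2 (neg_lt_zero.2 ha))
    apply Real.exp_le_exp.2
    have : (n : ℝ) ≤ (n : ℝ) ^ 2 := by exact_mod_cast Nat.le_self_pow two_ne_zero n
    nlinarith
  refine Summable.of_nat_of_neg (by simpa using h) (by simpa using h)

lemma aux_summable (a : ℝ) (ha : 0 < a) : ∀ g : ℕ,
    Summable fun n : Fin g → ℤ => Real.exp (-a * ∑ i, (n i : ℝ) ^ 2)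
  | 0 => by
    exact (hasSum_fintype _).summable
  | g + 1 => by
    rw [← (Fin.consEquiv fun _ => ℤ).summable_iff]
    have := Summable.mul_of_nonneg (aux_summable1 a ha) (aux_summable a ha g)
      (fun _ => (Real.exp_pos _).le) (fun _ => (Real.exp_pos _).le)
    refine this.congr fun p => ?_
    simp [Fin.consEquiv, Fin.sum_univ_succ, mul_add, Real.exp_add]

lemma aux_norm {g : ℕ} (z : Fin g → ℂ) (τ : Matrix (Fin g) (Fin g) ℂ) (n : Fin g → ℤ) :
    ‖thetaTerm z ((2 : ℂ) • τ) n‖ = Real.exp (-(2 * Real.pi) *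
      ((fun i => (n i : ℝ)) ⬝ᵥ (Matrix.of fun i j => (τ i j).im).mulVec (fun i => (n i : ℝ))
        + ∑ i, (n i : ℝ) * (z i).im)) := by
  rw [thetaTerm, Complex.norm_exp]
  congr 1
  have h1 : (((fun i => (n i : ℂ)) ⬝ᵥ ((2 : ℂ) • τ).mulVec (fun i => (n i : ℂ))).im)
      = 2 * ((fun i => (n i : ℝ)) ⬝ᵥ
        (Matrix.of fun i j => (τ i j).im).mulVec (fun i => (n i : ℝ))) := by
    rw [smul_mulVec, dotProduct_smul]
    simp [dotProduct, mulVec, Complex.im_sum, Complex.re_sum]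
  have h2 : ((fun i => (n i : ℂ)) ⬝ᵥ z).im = ∑ i, (n i : ℝ) * (z i).im := by
    simp [dotProduct, Complex.im_sum]
  simp only [mul_assoc]
  simp [h1, h2]
  ring

/-- given the Minkowski comparison constants `c, c'`, for all `m, d > 0`
there are a positive integer `k`, a symmetric matrix `β*` in the interior of `𝔐̄_g`
(taken inside `Sym(g,ℝ)`), and a bound `B > 0` such that for all `(z,τ)` with
`(Im z, Im τ + β*) ∈ C_m` and `(Im τ)_{1,1} > d`: `Im τ` is positive definite, the series
defining `ϑ(z,2τ)` converges absolutely, and `|exp(2πik τ_{g,g}) ϑ(z,2τ)| ≤ B`. -/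
theorem stmt_4 (g : ℕ) (hg : 1 ≤ g) (c c' : ℝ) (hc : 0 < c) (hc' : 0 < c')
    (hlow : ∀ β : Matrix (Fin g) (Fin g) ℝ, MinkReduced β → ∀ x : Fin g → ℝ,
      c * ∑ i, β i i * x i ^ 2 ≤ x ⬝ᵥ β.mulVec x)
    (hup : ∀ β : Matrix (Fin g) (Fin g) ℝ, MinkReduced β → ∀ x : Fin g → ℝ,
      x ⬝ᵥ β.mulVec x ≤ c' * ∑ i, β i i * x i ^ 2) :
    ∀ m d : ℝ, 0 < m → 0 < d →
      ∃ (k : ℕ) (βstar : Matrix (Fin g) (Fin g) ℝ) (hsym : βstar.IsSymm) (B : ℝ),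
        0 < k ∧ 0 < B ∧
        (⟨βstar, hsym⟩ : {β : Matrix (Fin g) (Fin g) ℝ // β.IsSymm}) ∈
          interior {β : {β : Matrix (Fin g) (Fin g) ℝ // β.IsSymm} | MinkClosed β.val} ∧
        ∀ (z : Fin g → ℂ) (τ : Matrix (Fin g) (Fin g) ℂ), τ.IsSymm →
          ((fun i => (z i).im), (Matrix.of fun i j => (τ i j).im) + βstar) ∈ CmSet g m →
          d < (τ ⟨0, by omega⟩ ⟨0, by omega⟩).im →
          (Matrix.of fun i j => (τ i j).im).PosDef ∧
          Summable (fun n : Fin g → ℤ => ‖thetaTerm z ((2 : ℂ) • τ) n‖) ∧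
          ‖Complex.exp (2 * Real.pi * Complex.I * (k : ℂ) *
              τ ⟨g - 1, by omega⟩ ⟨g - 1, by omega⟩) *
            RiemannTheta z ((2 : ℂ) • τ)‖ ≤ B := by
  intro m d hm hd
  have hg0 : (0 : ℝ) < g := by exact_mod_cast hg
  set s : ℝ := c * d / (2 * c' * (g + 1)) with hs_def
  have hs : 0 < s := by positivity
  set η : ℝ := s / (2 * (2 * g + 1)) with hη_def
  have hη : 0 < η := by positivity
  have hsη : (2 * g + 1) * (2 * η) = s := by rw [hη_def]; field_simp
  have hηs : η ≤ s := by nlinarith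
  let βs : Matrix (Fin g) (Fin g) ℝ :=
    Matrix.of fun i j => (if i = j then s * ((i : ℕ) + 1) else 0) + η
  have hβs : ∀ i j, βs i j = (if i = j then s * ((i : ℕ) + 1) else 0) + η := fun i j => rfl
  have hsym : βs.IsSymm := by
    ext i j
    rw [Matrix.transpose_apply, hβs, hβs]
    by_cases h : i = j
    · subst h; rfl
    · rw [if_neg h, if_neg (Ne.symm h)]
  have hnear : ∀ β : Matrix (Fin g) (Fin g) ℝ, β.IsSymm → (∀ i j, |β i j - βs i j| < η) →
      MinkClosed β := by
    intro β hβ h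
    refine aux_closed s (2 * η) hs (by positivity) hsη.le β hβ (fun i => ?_) (fun i j hij => ?_)
    · have := abs_lt.1 (h i i)
      rw [hβs, if_pos rfl] at this
      constructor <;> linarith [this.1, this.2]
    · have := abs_lt.1 (h i j)
      rw [hβs, if_neg hij] at this
      constructor <;> linarith [this.1, this.2]
  have hclosed : MinkClosed βs := hnear βs hsym (by intro i j; simpa using hη)
  have hdiag_pos : ∀ i, 0 < βs i i := by
    intro i; rw [hβs, if_pos rfl]; positivity
  have hred : MinkReduced βs := ⟨hclosed.1, fun i _ => hdiag_pos i, hclosed.2.2⟩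
  have hdiag : ∀ i, βs i i ≤ s * (g + 1) := by
    intro i
    rw [hβs, if_pos rfl]
    have : ((i : ℕ) : ℝ) + 1 ≤ g := by exact_mod_cast i.2
    nlinarith
  have hdiag' : ∀ i, c' * βs i i ≤ c * d / 2 := by
    intro i
    have h1 := mul_le_mul_of_nonneg_left (hdiag i) hc'.le
    have h2 : c' * (s * (g + 1)) = c * d / 2 := by rw [hs_def]; field_simp
    linarith
  obtain ⟨k, hk⟩ := exists_nat_gt (m ^ 2 * g / c)
  have hkpos : 0 < k := by
    have : (0 : ℝ) < k := lt_of_le_of_lt (by positivity) hk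
    exact_mod_cast this
  set a : ℝ := Real.pi * c * d / 2 with ha_def
  have ha : 0 < a := by have := Real.pi_pos; positivity
  have hsum := aux_summable a ha g
  set S : ℝ := ∑' n : Fin g → ℤ, Real.exp (-a * ∑ i, (n i : ℝ) ^ 2) with hS
  have hS0 : 0 ≤ S := tsum_nonneg fun _ => (Real.exp_pos _).le
  set K : ℝ := Real.exp (2 * Real.pi * k * (s * (g + 1))) with hK
  have hK0 : 0 < K := Real.exp_pos _
  refine ⟨k, βs, hsym, K * S + 1, hkpos, by positivity, ?_, ?_⟩
  · rw [mem_interior]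
    refine ⟨⋂ i, ⋂ j, {β | |β.val i j - βs i j| < η}, ?_, ?_, ?_⟩
    · intro β hβ
      simp only [Set.mem_iInter] at hβ
      exact hnear β.val β.2 hβ
    · refine isOpen_iInter_of_finite fun i => isOpen_iInter_of_finite fun j => ?_
      refine isOpen_lt ?_ continuous_const
      have : Continuous fun β : {β : Matrix (Fin g) (Fin g) ℝ // β.IsSymm} => β.val i j :=
        continuous_subtype_val.matrix_elem i j
      exact (this.sub continuous_const).abs
    · simp only [Set.mem_iInter]
      intro i j
      change |βs i j - βs i j| < η
      simpa using hη
  · intro z τ hτ hmem hd1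
    obtain ⟨hβ, hy⟩ := hmem
    simp only at hβ hy
    set Y : Matrix (Fin g) (Fin g) ℝ := Matrix.of fun i j => (τ i j).im with hY
    set β : Matrix (Fin g) (Fin g) ℝ := Y + βs with hβdef
    have hb1 : ∀ i : Fin g, (i : ℕ) = 0 → d < β i i := by
      intro i hi
      have : i = ⟨0, by omega⟩ := Fin.ext hi
      have h2 : d < Y i i := by rw [this]; exact hd1
      have h3 := hdiag_pos i
      simp only [hβdef, Matrix.add_apply]; linarith
    have hβred : MinkReduced β := ⟨hβ.1, fun i hi => hd.trans (hb1 i hi), hβ.2.2⟩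
    have hbd : ∀ i, d ≤ β i i := fun i =>
      (hb1 ⟨0, by omega⟩ rfl).le.trans (aux_mono β hβ.2.2.1 _ i (Nat.zero_le _))
    have hYlow : ∀ x : Fin g → ℝ, c / 2 * ∑ i, β i i * x i ^ 2 ≤ x ⬝ᵥ Y.mulVec x := by
      intro x
      have h1 := hlow β hβred x
      have h2 := hup βs hred x
      have h3 : x ⬝ᵥ β.mulVec x = x ⬝ᵥ Y.mulVec x + x ⬝ᵥ βs.mulVec x := by
        rw [hβdef, Matrix.add_mulVec, dotProduct_add]
      have h4 : c' * ∑ i, βs i i * x i ^ 2 ≤ c / 2 * ∑ i, β i i * x i ^ 2 := by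
        rw [Finset.mul_sum, Finset.mul_sum]
        refine Finset.sum_le_sum fun i _ => ?_
        rw [← mul_assoc, ← mul_assoc]
        refine mul_le_mul_of_nonneg_right ?_ (sq_nonneg _)
        have := mul_le_mul_of_nonneg_left (hbd i) hc.le
        linarith [hdiag' i]
      linarith
    have hYsym : Y.IsSymm := by
      ext i j
      simp only [hY, Matrix.transpose_apply, Matrix.of_apply]
      rw [hτ.apply]
    have hpos : Y.PosDef := by
      refine Matrix.PosDef.of_dotProduct_mulVec_pos ?_ ?_
      · rw [Matrix.IsHermitian, Matrix.conjTranspose_eq_transpose_of_trivial]; exact hYsym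
      · intro x hx
        rw [star_trivial]
        refine lt_of_lt_of_le ?_ (hYlow x)
        obtain ⟨i, hi⟩ := Function.ne_iff.1 hx
        have hi' : x i ≠ 0 := hi
        refine mul_pos (by positivity) (Finset.sum_pos' (fun j _ => ?_) ⟨i, Finset.mem_univ i, ?_⟩)
        · exact mul_nonneg (hd.le.trans (hbd j)) (sq_nonneg _)
        · exact mul_pos (hd.trans_le (hbd i)) (by positivity)
    set L : Fin g := ⟨g - 1, by omega⟩ with hL
    have hbL : ∀ i, β i i ≤ β L L := fun i =>
      aux_mono β hβ.2.2.1 i L (by rw [Fin.le_def]; simp only [hL]; omega)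
    have hterm : ∀ n : Fin g → ℤ, ‖thetaTerm z ((2 : ℂ) • τ) n‖ ≤
        Real.exp (2 * Real.pi * k * β L L) * Real.exp (-a * ∑ i, (n i : ℝ) ^ 2) := by
      intro n
      rw [aux_norm, ← Real.exp_add]
      apply Real.exp_le_exp.2
      have h1 := hYlow fun i => (n i : ℝ)
      have h2 : c * d / 4 * ∑ i, (n i : ℝ) ^ 2 - k * β L L ≤
          c / 2 * ∑ i, β i i * (n i : ℝ) ^ 2 + ∑ i, (n i : ℝ) * (z i).im := by
        have h3 : ∀ i, c * d / 4 * (n i : ℝ) ^ 2 - m ^ 2 / c * β L L ≤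
            c / 2 * (β i i * (n i : ℝ) ^ 2) + (n i : ℝ) * (z i).im := by
          intro i
          have hbi := hbd i
          have hb0 : 0 ≤ β i i := hd.le.trans hbi
          have e1 : -(|(n i : ℝ)| * (m * β i i)) ≤ (n i : ℝ) * (z i).im := by
            have := neg_abs_le ((n i : ℝ) * (z i).im)
            rw [abs_mul] at this
            have := mul_le_mul_of_nonneg_left (hy i) (abs_nonneg (n i : ℝ))
            linarith
          have e2 : |(n i : ℝ)| * m ≤ c / 4 * (n i : ℝ) ^ 2 + m ^ 2 / c := by
            rw [← sq_abs (n i : ℝ)]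
            have : c / 4 * |(n i : ℝ)| ^ 2 + m ^ 2 / c - |(n i : ℝ)| * m
              = (c * |(n i : ℝ)| / 2 - m) ^ 2 / c := by field_simp; ring
            have h0 : 0 ≤ (c * |(n i : ℝ)| / 2 - m) ^ 2 / c := by positivity
            linarith
          have e3 := mul_le_mul_of_nonneg_right e2 hb0
          have e4 : m ^ 2 / c * β i i ≤ m ^ 2 / c * β L L :=
            mul_le_mul_of_nonneg_left (hbL i) (by positivity)
          have e5 : c / 4 * (n i : ℝ) ^ 2 * d ≤ c / 4 * (n i : ℝ) ^ 2 * β i i :=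
            mul_le_mul_of_nonneg_left hbi (by positivity)
          linarith
        have h4 := Finset.sum_le_sum fun i (_ : i ∈ Finset.univ) => h3 i
        rw [Finset.sum_sub_distrib, Finset.sum_add_distrib, ← Finset.mul_sum,
          Finset.sum_const, Finset.card_univ, Fintype.card_fin, nsmul_eq_mul,
          ← Finset.mul_sum] at h4
        have h5 : g * (m ^ 2 / c * β L L) ≤ k * β L L := by
          have := mul_le_mul_of_nonneg_right hk.le (hd.le.trans (hbd L))
          calc g * (m ^ 2 / c * β L L) = m ^ 2 * g / c * β L L := by ring
            _ ≤ _ := this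
        linarith
      have h6 := mul_le_mul_of_nonneg_left (h2.trans (add_le_add_left h1 _))
        (by positivity : 0 ≤ 2 * Real.pi)
      rw [ha_def]
      linarith
    have hsummable : Summable (fun n : Fin g → ℤ => ‖thetaTerm z ((2 : ℂ) • τ) n‖) :=
      Summable.of_nonneg_of_le (fun _ => norm_nonneg _) hterm (hsum.mul_left _)
    refine ⟨hpos, hsummable, ?_⟩
    have hth : ‖RiemannTheta z ((2 : ℂ) • τ)‖ ≤ Real.exp (2 * Real.pi * k * β L L) * S := by
      rw [RiemannTheta, hS, ← tsum_mul_left]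
      exact (norm_tsum_le_tsum_norm hsummable).trans
        (hsummable.tsum_le_tsum hterm (hsum.mul_left _))
    have hexp : ‖Complex.exp (2 * Real.pi * Complex.I * (k : ℂ) * τ L L)‖
        = Real.exp (-(2 * Real.pi * k * Y L L)) := by
      rw [Complex.norm_exp]
      congr 1
      have : (2 * Real.pi * Complex.I * (k : ℂ) * τ L L)
        = ((2 * Real.pi * k : ℝ) : ℂ) * (Complex.I * τ L L) := by push_cast; ring
      rw [this, Complex.re_ofReal_mul]
      simp [hY]
    rw [norm_mul, hexp]
    calc _ ≤ Real.exp (-(2 * Real.pi * k * Y L L)) * (Real.exp (2 * Real.pi * k * β L L) * S) :=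
          mul_le_mul_of_nonneg_left hth (Real.exp_pos _).le
      _ = Real.exp (2 * Real.pi * k * βs L L) * S := by
          rw [← mul_assoc, ← Real.exp_add]
          congr 2
          simp only [hβdef, Matrix.add_apply]; ring
      _ ≤ K * S := by
          refine mul_le_mul_of_nonneg_right (Real.exp_le_exp.2 ?_) hS0
          exact mul_le_mul_of_nonneg_left (hdiag L) (by have := Real.pi_pos; positivity)
      _ ≤ K * S + 1 := by linarith
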